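/- For all 1 ≤ i, j ≤ n, the operators D_i and D_j commute: D_iD_j = D_jD_i. -/

import Mathlib

noncomputable section

/-- The Laurent polynomial ring `R[X₁^{±1}, …, Xₙ^{±1}]` in `n` variables over `R`,
realised as the monoid algebra of the additive monoid `Fin n →₀ ℤ` of exponent vectors. -/
abbrev Laur (R : Type*) [CommRing R] (n : ℕ) : Type _ :=
  AddMonoidAlgebra R (Fin n →₀ ℤ)

variable {R : Type*} [CommRing R] {n : ℕ}

/-- The monomial `c · X^a`. -/
def mono (a : Fin n →₀ ℤ) (c : R) : Laur R n := AddMonoidAlgebra.single a c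

/-- The generator `X_i`. -/
def Xel (i : Fin n) : Laur R n := mono (Finsupp.single i 1) 1

/-- The element `X_i⁻¹`. -/
def XinvEl (i : Fin n) : Laur R n := mono (Finsupp.single i (-1)) 1

/-- Multiplication by a Laurent polynomial, as a linear endomorphism. -/
def mulOp (x : Laur R n) : Module.End R (Laur R n) := LinearMap.mulLeft R x

/-- The operator of multiplication by `X_i`, with `ℕ`-indexing (`0`-based; junk value `1`
out of range). -/
def XOp (i : ℕ) : Module.End R (Laur R n) :=
  if h : i < n then mulOp (Xel ⟨i, h⟩) else 1

/-- The operator of multiplication by `X_i⁻¹`, with `ℕ`-indexing. -/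
def XinvOp (i : ℕ) : Module.End R (Laur R n) :=
  if h : i < n then mulOp (XinvEl ⟨i, h⟩) else 1

/-- Ascending product `f s * f (s+1) * ⋯ * f (s+len-1)` (equal to `1` when `len = 0`). -/
def aF {M : Type*} [Monoid M] (f : ℕ → M) (s len : ℕ) : M :=
  ((List.range' s len).map f).prod

/-- Descending product `f (s+len-1) * ⋯ * f (s+1) * f s` (equal to `1` when `len = 0`). -/
def dF {M : Type*} [Monoid M] (f : ℕ → M) (s len : ℕ) : M :=
  (((List.range' s len).map f).reverse).prod

/-- Integer power `u^z`, where `v` is a designated (two-sided) inverse of `u`. -/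
def zpowOp {M : Type*} [Monoid M] (u v : M) (z : ℤ) : M :=
  if 0 ≤ z then u ^ z.toNat else v ^ (-z).toNat


section algebraPart
variable {A : Type*} [Ring A]

theorem aF_zero (f : ℕ → A) (s : ℕ) : aF f s 0 = 1 := by simp [aF]
theorem dF_zero (f : ℕ → A) (s : ℕ) : dF f s 0 = 1 := by simp [dF]
theorem aF_succ_left (f : ℕ → A) (s l : ℕ) : aF f s (l+1) = f s * aF f (s+1) l := by
  simp [aF, List.range'_succ]
theorem dF_succ_left (f : ℕ → A) (s l : ℕ) : dF f s (l+1) = dF f (s+1) l * f s := by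
  simp [dF, List.range'_succ]
theorem aF_succ_right (f : ℕ → A) (s l : ℕ) : aF f s (l+1) = aF f s l * f (s+l) := by
  simp [aF, List.range'_concat]

theorem aF_comm (f : ℕ → A) (z : A) (s l : ℕ) (h : ∀ k, s ≤ k → k < s + l → Commute (f k) z) :
    Commute (aF f s l) z := by
  induction l with
  | zero => rw [aF_zero]; exact Commute.one_left z
  | succ l ih =>
    rw [aF_succ_right]
    exact (ih (fun k h1 h2 => h k h1 (by omega))).mul_left (h _ (by omega) (by omega))

/-- Generic key identity. -/
theorem key_comm (x y y' t t' h : A) (hc : ∀ z : A, h * z = z * h)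
    (tt' : t * t' = 1) (tpt : t' * t = 1) (yy' : y * y' = 1) (ypy : y' * y = 1)
    (ht : t' = t - h)
    (R1 : y * (t * x * t') = t * x * t * y)
    (R3 : y * t * (y * t) = t * y * (t * y))
    (R4 : x * (t * x * t) = t * x * t * x) :
    (x * (y - y')) * (t * (x * (y - y')) * t) = (t * (x * (y - y')) * t) * (x * (y - y')) := by
  have R1' : y * t * x = t * x * t * y * t := by
    calc y * t * x = y * (t * x * t') * t := by simp only [mul_assoc, tpt, mul_one]
      _ = _ := by rw [R1]
  have R2' : y' * t * x = t * x * t' * y' * t' := by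
    have e : y' * (t * x * t) = t * x * t' * y' := by
      calc y' * (t * x * t) = y' * (t * x * t * y) * y' := by simp only [mul_assoc, yy', mul_one]
        _ = y' * (y * (t * x * t')) * y' := by rw [R1]
        _ = (y' * y) * (t * x * t' * y') := by simp only [mul_assoc]
        _ = _ := by rw [ypy, one_mul]
    calc y' * t * x = y' * (t * x * t) * t' := by simp only [mul_assoc, tt', mul_one]
      _ = _ := by rw [e]
  have S1 : t * y * t * y' = y' * t * y * t := by
    calc t * y * t * y' = (y' * y) * t * y * t * y' := by rw [ypy, one_mul]; 
      _ = y' * (y * t * (y * t)) * y' := by simp only [mul_assoc]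
      _ = y' * (t * y * (t * y)) * y' := by rw [R3]
      _ = y' * t * y * t * (y * y') := by simp only [mul_assoc]
      _ = _ := by rw [yy', mul_one]
  have S2 : t' * y' * t' * y = y * t' * y' * t' := by
    have e : (t * y * t * y') * (y * t' * y' * t') = 1 := by
      calc (t * y * t * y') * (y * t' * y' * t') = t * y * t * (y' * y) * t' * y' * t' := by
            simp only [mul_assoc]
        _ = t * y * (t * t') * y' * t' := by simp only [ypy, mul_one, mul_assoc]
        _ = t * (y * y') * t' := by simp only [tt', mul_one, mul_assoc]
        _ = 1 := by rw [yy', mul_one, tt']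
    have e2 : (t' * y' * t' * y) * (y' * t * y * t) = 1 := by
      calc (t' * y' * t' * y) * (y' * t * y * t) = t' * y' * t' * (y * y') * t * y * t := by
            simp only [mul_assoc]
        _ = t' * y' * (t' * t) * y * t := by simp only [yy', mul_one, mul_assoc]
        _ = t' * (y' * y) * t := by simp only [tpt, mul_one, mul_assoc]
        _ = 1 := by rw [ypy, mul_one, tpt]
    rw [← S1] at e2
    exact left_inv_eq_right_inv e2 e
  have S3 : t' * y' * t' * y' = y' * t' * y' * t' := by
    have e : (y * t * (y * t)) * (t' * y' * t' * y') = 1 := by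
      calc _ = y * t * y * (t * t') * y' * t' * y' := by simp only [mul_assoc]
        _ = y * t * (y * y') * t' * y' := by simp only [tt', mul_one, mul_assoc]
        _ = y * (t * t') * y' := by simp only [yy', mul_one, mul_assoc]
        _ = 1 := by rw [tt', mul_one, yy']
    have e2 : (y' * t' * y' * t') * (t * y * (t * y)) = 1 := by
      calc _ = y' * t' * y' * (t' * t) * y * t * y := by simp only [mul_assoc]
        _ = y' * t' * (y' * y) * t * y := by simp only [tpt, mul_one, mul_assoc]
        _ = y' * (t' * t) * y := by simp only [ypy, mul_one, mul_assoc]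
        _ = 1 := by rw [tpt, mul_one, ypy]
    rw [← R3] at e2
    exact (left_inv_eq_right_inv e2 e).symm
  -- the eight products, with P = x t x t
  have a1 : x * y * t * (x * y) * t = x * (t * x * t) * (y * t * (y * t)) := by
    calc _ = x * (y * t * x) * y * t := by simp only [mul_assoc]
      _ = _ := by rw [R1']; simp only [mul_assoc]
  have a2 : t * x * y * t * (x * y) = x * (t * x * t) * (t * y * (t * y)) := by
    calc _ = t * x * (y * t * x) * y := by simp only [mul_assoc]
      _ = t * x * t * x * (t * y * (t * y)) := by rw [R1']; simp only [mul_assoc]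
      _ = _ := by rw [R4]
  have b1 : x * y' * t * (x * y') * t = x * (t * x * t) * (t' * (t' * y' * t' * y') * t) := by
    calc _ = x * (y' * t * x) * y' * t := by simp only [mul_assoc]
      _ = x * t * x * 1 * t' * y' * t' * y' * t := by rw [R2']; simp only [mul_assoc, one_mul]
      _ = _ := by rw [← tt']; simp only [mul_assoc]
  have b2 : t * x * y' * t * (x * y') = x * (t * x * t) * (t' * (y' * t' * y')) := by
    calc _ = t * x * (y' * t * x) * y' := by simp only [mul_assoc]
      _ = t * x * t * x * (t' * (y' * t' * y')) := by rw [R2']; simp only [mul_assoc]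
      _ = _ := by rw [R4]
  have c1 : x * y * t * (x * y') * t = x * (t * x * t) * (y * t * y' * t) := by
    calc _ = x * (y * t * x) * y' * t := by simp only [mul_assoc]
      _ = _ := by rw [R1']; simp only [mul_assoc]
  have c2 : t * x * y * t * (x * y') = x * (t * x * t) * (t * y * t * y') := by
    calc _ = t * x * (y * t * x) * y' := by simp only [mul_assoc]
      _ = t * x * t * x * (t * y * t * y') := by rw [R1']; simp only [mul_assoc]
      _ = _ := by rw [R4]
  have d1 : x * y' * t * (x * y) * t = x * (t * x * t) * (t' * (t' * y' * t' * y) * t) := by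
    calc _ = x * (y' * t * x) * y * t := by simp only [mul_assoc]
      _ = x * t * x * 1 * t' * y' * t' * y * t := by rw [R2']; simp only [mul_assoc, one_mul]
      _ = _ := by rw [← tt']; simp only [mul_assoc]
  have d2 : t * x * y' * t * (x * y) = x * (t * x * t) * (t' * y' * t' * y) := by
    calc _ = t * x * (y' * t * x) * y := by simp only [mul_assoc]
      _ = t * x * t * x * (t' * y' * t' * y) := by rw [R2']; simp only [mul_assoc]
      _ = _ := by rw [R4]
  have ab : t' * (t' * y' * t' * y') * t = t' * (y' * t' * y') := by
    rw [S3]; simp only [mul_assoc, tpt, mul_one]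
  have cd : y * t * y' * t + t' * (t' * y' * t' * y) * t = t * y * t * y' + t' * y' * t' * y := by
    have e1 : t' * (t' * y' * t' * y) * t = t' * y * t' * y' := by
      rw [S2]; simp only [mul_assoc, tpt, mul_one]
    rw [e1, S2, ht]
    have e2 : (t - h) * y * (t - h) * y' = t * y * t * y' - h * (y * t * y') - h * t * (y * y')
        + h * h * (y * y') := by
      have : (t - h) * y * (t - h) * y' = t * y * t * y' - h * y * t * y' - t * y * (h * y')
        + h * y * (h * y') := by noncomm_ring
      rw [this, hc y', hc t, hc y]
      simp only [mul_assoc, hc]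
    have e3 : y * (t - h) * y' * (t - h) = y * t * y' * t - h * (y * t * y') - h * t * (y * y')
        + h * h * (y * y') := by
      have : y * (t - h) * y' * (t - h) = y * t * y' * t - y * t * y' * h - y * (h * y') * t
        + y * (h * y') * h := by noncomm_ring
      rw [this, hc y', ← mul_assoc y y' h, yy', hc (y * t * y'), hc t]
      simp only [mul_assoc, hc, one_mul, mul_one]
    rw [e2, e3]; abel
  have lhs : (x * (y - y')) * (t * (x * (y - y')) * t) =
      x * y * t * (x * y) * t + x * y' * t * (x * y') * t
      - (x * y * t * (x * y') * t + x * y' * t * (x * y) * t) := by noncomm_ring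
  have rhs : (t * (x * (y - y')) * t) * (x * (y - y')) =
      t * x * y * t * (x * y) + t * x * y' * t * (x * y')
      - (t * x * y * t * (x * y') + t * x * y' * t * (x * y)) := by noncomm_ring
  rw [lhs, rhs, a1, a2, b1, b2, c1, c2, d1, d2, R3, ab, ← mul_add (x * (t * x * t)) _ (t' * (t' * y' * t' * y) * t), cd, mul_add]

/-- shift lemma -/
theorem aF_shift (g : ℕ → A) (N : ℕ)
    (far : ∀ i j, i + 1 < j → j < N → Commute (g i) (g j))
    (braid : ∀ i, i + 1 < N → g i * g (i+1) * g i = g (i+1) * g i * g (i+1))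
    (m : ℕ) (hm : m ≤ N) (i : ℕ) (hi : i + 1 < m) :
    aF g 0 m * g i = g (i+1) * aF g 0 m := by
  induction m with
  | zero => omega
  | succ m ih =>
    rw [aF_succ_right, zero_add]
    rcases Nat.lt_or_ge (i+1) m with h | h
    · rw [mul_assoc, ← (far i m h (by omega)).eq, ← mul_assoc, ih (by omega) h, mul_assoc]
    · obtain rfl : m = i + 1 := by omega
      have hcomm : Commute (aF g 0 i) (g (i+1)) :=
        aF_comm g _ 0 i (fun k _ h2 => far k (i+1) (by omega) (by omega))
      rw [aF_succ_right, zero_add]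
      calc aF g 0 i * g i * g (i+1) * g i = aF g 0 i * (g i * g (i+1) * g i) := by
            simp only [mul_assoc]
        _ = (aF g 0 i * g (i+1)) * (g i * g (i+1)) := by rw [braid i (by omega)]; simp only [mul_assoc]
        _ = _ := by rw [hcomm.eq]; simp only [mul_assoc]

theorem inv_comm_of {a a' b b' : A} (h1 : a * a' = 1) (h1' : a' * a = 1) (h2 : b * b' = 1)
    (h2' : b' * b = 1) (h : a * b = b * a) : a' * b' = b' * a' := by
  have e1 : (b * a) * (a' * b') = 1 := by
    calc _ = b * (a * a') * b' := by simp only [mul_assoc]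
      _ = 1 := by rw [h1, mul_one, h2]
  have e2 : (b' * a') * (a * b) = 1 := by
    calc _ = b' * (a' * a) * b := by simp only [mul_assoc]
      _ = 1 := by rw [h1', mul_one, h2']
  rw [h] at e2
  exact (left_inv_eq_right_inv e2 e1).symm

theorem inv_move {a a' b b' z : A} (h1' : a' * a = 1) (h2 : b * b' = 1)
    (h : a * z = z * b) : z * b' = a' * z := by
  calc z * b' = (a' * a) * z * b' := by rw [h1', one_mul]
    _ = a' * (a * z) * b' := by simp only [mul_assoc]
    _ = a' * (z * b) * b' := by rw [h]
    _ = a' * z * (b * b') := by simp only [mul_assoc]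
    _ = _ := by rw [h2, mul_one]

theorem D_comm_abstract (N : ℕ) (T Ti D : ℕ → A) (h p x x1 y y' : A) (hc : ∀ z : A, h * z = z * h)
    (hTi : ∀ k, k < N → Ti k = T k - h)
    (hinv : ∀ k, k < N → T k * Ti k = 1 ∧ Ti k * T k = 1)
    (far : ∀ i j, i + 1 < j → j < N → T i * T j = T j * T i)
    (braid : ∀ i, i + 1 < N → T i * T (i+1) * T i = T (i+1) * T i * T (i+1))
    (hp : ∀ k, k + 1 < N → p * T (k+1) = T k * p)
    (hpp : 0 < N → p * p * T 0 = T (N-1) * (p * p))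
    (hx : ∀ k, k + 1 < N → T k * x = x * T k)
    (hx1 : 0 < N → x1 = T (N-1) * x * T (N-1))
    (hxx : x * x1 = x1 * x)
    (hpx : p * x = x1 * p)
    (hy : y = p * aF Ti 0 N) (yy' : y * y' = 1) (ypy : y' * y = 1)
    (hDN : D N = x * (y - y'))
    (hD : ∀ i, i < N → D i = T i * D (i+1) * T i) :
    ∀ i j, i ≤ N → j ≤ N → D i * D j = D j * D i := by
  have gfar : ∀ i j, i + 1 < j → j < N → Commute (Ti i) (Ti j) := fun i j h1 h2 =>
    inv_comm_of (hinv i (by omega)).1 (hinv i (by omega)).2 (hinv j h2).1 (hinv j h2).2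
      (far i j h1 h2)
  have gbraid : ∀ i, i + 1 < N → Ti i * Ti (i+1) * Ti i = Ti (i+1) * Ti i * Ti (i+1) := by
    intro i hi
    obtain ⟨a1, a2⟩ := hinv i (by omega)
    obtain ⟨b1, b2⟩ := hinv (i+1) hi
    have e1 : (T i * T (i+1) * T i) * (Ti i * Ti (i+1) * Ti i) = 1 := by
      calc _ = T i * (T (i+1) * (T i * Ti i) * Ti (i+1)) * Ti i := by simp only [mul_assoc]
        _ = 1 := by rw [a1, mul_one, b1, mul_one, a1]
    have e2 : (Ti (i+1) * Ti i * Ti (i+1)) * (T (i+1) * T i * T (i+1)) = 1 := by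
      calc _ = Ti (i+1) * (Ti i * (Ti (i+1) * T (i+1)) * T i) * T (i+1) := by simp only [mul_assoc]
        _ = 1 := by rw [b2, mul_one, a2, mul_one, b2]
    rw [← braid i hi] at e2
    exact (left_inv_eq_right_inv e2 e1).symm
  have gp : ∀ k, k + 1 < N → p * Ti (k+1) = Ti k * p := fun k hk =>
    inv_move (hinv k (by omega)).2 (hinv (k+1) hk).1 (hp k hk).symm
  have gx : ∀ k, k + 1 < N → Ti k * x = x * Ti k := fun k hk =>
    (inv_move (hinv k (by omega)).2 (hinv k (by omega)).1 (hx k hk)).symm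
  -- T k commutes with y
  have hTy : ∀ k, k + 1 < N → T k * y = y * T k := by
    intro k hk
    have e := aF_shift Ti N gfar gbraid N le_rfl k hk
    have e2 : aF Ti 0 N * T k = T (k+1) * aF Ti 0 N :=
      inv_move (hinv (k+1) hk).1 (hinv k (by omega)).2 e.symm
    rw [hy, mul_assoc p, e2, ← mul_assoc, ← mul_assoc p, hp k hk]
  have hTy' : ∀ k, k + 1 < N → T k * y' = y' * T k := by
    intro k hk
    exact inv_move ypy yy' (hTy k hk).symm
  have hTE : ∀ k, k + 1 < N → T k * D N = D N * T k := by
    intro k hk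
    rw [hDN, ← mul_assoc, hx k hk, mul_assoc, mul_sub, hTy k hk, hTy' k hk, ← sub_mul, mul_assoc]
  -- key
  have hkey : 0 < N → D N * (T (N-1) * D N * T (N-1)) = (T (N-1) * D N * T (N-1)) * D N := by
    intro hN
    obtain ⟨M, rfl⟩ : ∃ M, N = M + 1 := ⟨N - 1, by omega⟩
    simp only [Nat.add_sub_cancel] at *
    obtain ⟨a1, a2⟩ := hinv M (by omega)
    have hyS : y = p * aF Ti 0 M * Ti M := by rw [hy, aF_succ_right, zero_add, mul_assoc]
    have hyt : y * T M = p * aF Ti 0 M := by rw [hyS, mul_assoc, a2, mul_one]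
    have hSx : aF Ti 0 M * x = x * aF Ti 0 M :=
      (aF_comm Ti x 0 M (fun k _ hk => gx k (by omega))).eq
    rw [hDN]
    refine key_comm x y y' (T M) (Ti M) h hc a1 a2 yy' ypy (hTi M (by omega)) ?_ ?_ ?_
    · rw [← hx1 hN]
      calc y * (T M * x * Ti M) = (y * T M) * x * Ti M := by simp only [mul_assoc]
        _ = p * (aF Ti 0 M * x) * Ti M := by rw [hyt]; simp only [mul_assoc]
        _ = (p * x) * aF Ti 0 M * Ti M := by rw [hSx]; simp only [mul_assoc]
        _ = x1 * y := by rw [hpx, hyS]; simp only [mul_assoc]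
    · have hpS : ∀ m, m ≤ M → aF Ti 0 m * p = p * aF Ti 1 m := by
        intro m
        induction m with
        | zero => intro _; simp [aF_zero]
        | succ m ih =>
          intro hm
          rw [aF_succ_right, aF_succ_right, zero_add, mul_assoc, ← gp m (by omega), ← mul_assoc,
            ih (by omega), add_comm 1 m, mul_assoc]
      have hsh : ∀ m, m ≤ M → aF Ti 1 m * aF Ti 0 (M+1) = aF Ti 0 (M+1) * aF Ti 0 m := by
        intro m
        induction m with
        | zero => intro _; simp [aF_zero]
        | succ m ih =>
          intro hm
          rw [aF_succ_right Ti 1 m, aF_succ_right Ti 0 m, zero_add, mul_assoc, add_comm 1 m,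
            ← aF_shift Ti (M+1) gfar gbraid (M+1) le_rfl m (by omega), ← mul_assoc,
            ih (by omega), mul_assoc]
      have hV : y * T M * (y * T M) = p * p * (aF Ti 1 M * aF Ti 0 M) := by
        rw [hyt]
        calc _ = p * (aF Ti 0 M * p) * aF Ti 0 M := by simp only [mul_assoc]
          _ = _ := by rw [hpS M le_rfl]; simp only [mul_assoc]
      have gpp : p * p * Ti 0 = Ti M * (p * p) :=
        inv_move a2 (hinv 0 hN).1 (hpp hN).symm
      have hVg : (y * T M * (y * T M)) * Ti M = Ti M * (y * T M * (y * T M)) := by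
        rw [hV]
        calc _ = p * p * (aF Ti 1 M * (aF Ti 0 M * Ti M)) := by simp only [mul_assoc]
          _ = p * p * (aF Ti 0 (M+1) * aF Ti 0 M) := by
            rw [← hsh M le_rfl, aF_succ_right Ti 0 M, zero_add]
          _ = p * p * Ti 0 * (aF Ti 1 M * aF Ti 0 M) := by
            rw [aF_succ_left, zero_add]; simp only [mul_assoc]
          _ = _ := by rw [gpp]; simp only [mul_assoc]
      calc y * T M * (y * T M) = T M * Ti M * (y * T M * (y * T M)) := by rw [a1, one_mul]
        _ = T M * ((y * T M * (y * T M)) * Ti M) := by rw [hVg]; simp only [mul_assoc]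
        _ = _ := by simp only [mul_assoc, a1, mul_one]
    · rw [← hx1 hN, hxx]
  -- (a)
  have ha : ∀ d i, i + d = N → ∀ k, k + 1 < i → T k * D i = D i * T k := by
    intro d
    induction d with
    | zero => intro i hi k hk; obtain rfl : i = N := by omega
              exact hTE k hk
    | succ d ih =>
      intro i hi k hk
      rw [hD i (by omega)]
      have c1 : Commute (T k) (T i) := far k i hk (by omega)
      have c2 : Commute (T k) (D (i+1)) := ih (i+1) (by omega) k (by omega)
      exact ((c1.mul_right c2).mul_right c1).eq
  -- (c)
  have hcons : ∀ d i, i + 1 + d = N → D i * D (i+1) = D (i+1) * D i := by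
    intro d
    induction d with
    | zero =>
      intro i hi
      obtain rfl : N = i + 1 := by omega
      rw [hD i (by omega)]
      exact (hkey (by omega)).symm
    | succ d ih =>
      intro i hi
      have IH := ih (i+1) (by omega)
      have h1 := hD (i+1) (by omega)
      have hE : T i * D (i+1+1) = D (i+1+1) * T i := ha d (i+1+1) (by omega) i (by omega)
      have hb := braid i (by omega)
      rw [hD i (by omega)]
      rw [h1] at IH ⊢
      generalize D (i+1+1) = E at *
      generalize T i = a at *
      generalize T (i+1) = b at *
      calc a * (b * E * b) * a * (b * E * b) = a * b * E * (b * a * b) * E * b := by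
            simp only [mul_assoc]
        _ = a * b * (E * a) * b * (a * E) * b := by rw [← hb]; simp only [mul_assoc]
        _ = a * b * (a * E) * b * (E * a) * b := by rw [hE]
        _ = (a * b * a) * E * b * E * a * b := by simp only [mul_assoc]
        _ = b * a * (b * E * b * E) * a * b := by rw [hb]; simp only [mul_assoc]
        _ = b * a * E * b * E * (b * a * b) := by rw [IH]; simp only [mul_assoc]
        _ = b * (a * E) * b * (E * a) * b * a := by rw [← hb]; simp only [mul_assoc]
        _ = b * (E * a) * b * (a * E) * b * a := by rw [hE]
        _ = b * E * (a * b * a) * E * b * a := by simp only [mul_assoc]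
        _ = _ := by rw [hb]; simp only [mul_assoc]
  have hlt : ∀ d i j, i + 1 + d = j → j ≤ N → D i * D j = D j * D i := by
    intro d
    induction d with
    | zero => intro i j hij hj; subst hij; exact hcons (N - (i+1)) i (by omega)
    | succ d ih =>
      intro i j hij hj
      have c1 : Commute (T i) (D j) := ha (N - j) j (by omega) i (by omega)
      have c2 : Commute (D (i+1)) (D j) := ih (i+1) j (by omega) hj
      rw [hD i (by omega)]
      exact ((c1.mul_left c2).mul_left c1).eq
  intro i j hi hj
  rcases lt_trichotomy i j with h | h | h
  · exact hlt (j - i - 1) i j (by omega) hj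
  · rw [h]
  · exact (hlt (i - j - 1) j i (by omega) hi).symm

end algebraPart

theorem braid_field {K : Type*} [Field K] (a b c t r p sp tp stp tsp wp : K)
    (hab : b - a ≠ 0) (hbc : c - b ≠ 0) (hac : c - a ≠ 0)
    (u su tu stu v sv w u2 su2 tu2 tsu2 v2 tv2 w2 : K)
    (h1 : (b - a) * u = (r * b - t * a) * sp + (t - r) * (b * p))
    (h1s : (a - b) * su = (r * a - t * b) * p + (t - r) * (a * sp))
    (h1t : (c - a) * tu = (r * c - t * a) * tsp + (t - r) * (c * tp))
    (h1st : (c - b) * stu = (r * c - t * b) * wp + (t - r) * (c * stp))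
    (h2 : (c - b) * v = (r * c - t * b) * tu + (t - r) * (c * u))
    (h2s : (c - a) * sv = (r * c - t * a) * stu + (t - r) * (c * su))
    (h3 : (b - a) * w = (r * b - t * a) * sv + (t - r) * (b * v))
    (k1 : (c - b) * u2 = (r * c - t * b) * tp + (t - r) * (c * p))
    (k1t : (b - c) * tu2 = (r * b - t * c) * p + (t - r) * (b * tp))
    (k1s : (c - a) * su2 = (r * c - t * a) * stp + (t - r) * (c * sp))
    (k1ts : (b - a) * tsu2 = (r * b - t * a) * wp + (t - r) * (b * tsp))
    (k2 : (b - a) * v2 = (r * b - t * a) * su2 + (t - r) * (b * u2))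
    (k2t : (c - a) * tv2 = (r * c - t * a) * tsu2 + (t - r) * (c * tu2))
    (k3 : (c - b) * w2 = (r * c - t * b) * tv2 + (t - r) * (c * v2)) :
    w = w2 := by
  have hba : a - b ≠ 0 := by intro h; apply hab; linear_combination -h
  have hcb : b - c ≠ 0 := by intro h; apply hbc; linear_combination -h
  have e1 := eq_div_of_mul_eq hab ((mul_comm _ _).trans h1)
  have e1s : su = -((r * a - t * b) * p + (t - r) * (a * sp)) / (b - a) :=
    eq_div_of_mul_eq hab (by linear_combination -h1s)
  have e1t := eq_div_of_mul_eq hac ((mul_comm _ _).trans h1t)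
  have e1st := eq_div_of_mul_eq hbc ((mul_comm _ _).trans h1st)
  have e2 := eq_div_of_mul_eq hbc ((mul_comm _ _).trans h2)
  have e2s := eq_div_of_mul_eq hac ((mul_comm _ _).trans h2s)
  have e3 := eq_div_of_mul_eq hab ((mul_comm _ _).trans h3)
  have f1 := eq_div_of_mul_eq hbc ((mul_comm _ _).trans k1)
  have f1t : tu2 = -((r * b - t * c) * p + (t - r) * (b * tp)) / (c - b) :=
    eq_div_of_mul_eq hbc (by linear_combination -k1t)
  have f1s := eq_div_of_mul_eq hac ((mul_comm _ _).trans k1s)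
  have f1ts := eq_div_of_mul_eq hab ((mul_comm _ _).trans k1ts)
  have f2 := eq_div_of_mul_eq hab ((mul_comm _ _).trans k2)
  have f2t := eq_div_of_mul_eq hac ((mul_comm _ _).trans k2t)
  have f3 := eq_div_of_mul_eq hbc ((mul_comm _ _).trans k3)
  rw [e3, f3, e2s, e2, f2t, f2, e1, e1s, e1t, e1st, f1, f1t, f1s, f1ts]
  clear * - hab hbc hac
  field_simp
  ring

section concretePart
variable {F : Type*} [Field F] {m : ℕ}

theorem lin_ext_mono {f g : Module.End F (Laur F m)}
    (h : ∀ a c, f (mono a c) = g (mono a c)) : f = g := by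
  apply LinearMap.ext
  intro p
  induction p using AddMonoidAlgebra.induction_linear with
  | zero => simp
  | add p q hp hq => rw [map_add, map_add, hp, hq]
  | single a c => exact h a c

theorem mono_mul (a b : Fin m →₀ ℤ) (c d : F) : mono a c * mono b d = mono (a + b) (c * d) :=
  AddMonoidAlgebra.single_mul_single _ _ _ _

theorem smul_mono (a : Fin m →₀ ℤ) (c z : F) : z • mono a c = mono a (z * c) :=
  AddMonoidAlgebra.smul_single _ _ _

theorem mul_hom_of_mono {f : Module.End F (Laur F m)}
    (h : ∀ a b c d, f (mono a c * mono b d) = f (mono a c) * f (mono b d)) (p r : Laur F m) :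
    f (p * r) = f p * f r := by
  induction p using AddMonoidAlgebra.induction_linear with
  | zero => simp
  | add p q hp hq => rw [add_mul, map_add, map_add, hp, hq, add_mul]
  | single a c =>
    induction r using AddMonoidAlgebra.induction_linear with
    | zero => simp
    | add p q hp hq => rw [mul_add, map_add, map_add, hp, hq, mul_add]
    | single b d => exact h a b c d

theorem Xel_sub_ne {i j : Fin m} (h : i ≠ j) : (Xel i - Xel j : Laur F m) ≠ 0 := by
  intro h0
  have h1 : (Xel i : Laur F m) = Xel j := sub_eq_zero.mp h0
  have h2 := AddMonoidAlgebra.single_left_injective (one_ne_zero (α := F)) h1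
  exact h (Finsupp.single_left_injective one_ne_zero h2)

/-- the defining relation of a Demazure-Lusztig operator -/
def IsDem (τ : F) (a b : Laur F m) (s T : Module.End F (Laur F m)) : Prop :=
  ∀ f, (b - a) * T f = (τ⁻¹ • b - τ • a) * s f + (τ - τ⁻¹) • (b * f)

variable {τ : F} {a b : Laur F m} {s T : Module.End F (Laur F m)}

theorem IsDem.intertwine (hT : IsDem τ a b s T) {a2 b2 : Laur F m}
    {s2 T2 : Module.End F (Laur F m)} (hT2 : IsDem τ a2 b2 s2 T2) (hne : b2 - a2 ≠ 0)
    (φ : Module.End F (Laur F m)) (hφ : ∀ f g, φ (f * g) = φ f * φ g) {z : F} (hz : z ≠ 0)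
    (hb : φ b = z • b2) (ha : φ a = z • a2) (hs : ∀ f, φ (s f) = s2 (φ f)) (f : Laur F m) :
    φ (T f) = T2 (φ f) := by
  have h1 := congrArg φ (hT f)
  simp only [hφ, map_add, map_sub, map_smul, hb, ha, hs] at h1
  have h2 := hT2 (φ f)
  have h3 : (b2 - a2) * φ (T f) = (b2 - a2) * T2 (φ f) := by
    have : z • ((b2 - a2) * φ (T f)) = z • ((b2 - a2) * T2 (φ f)) := by
      rw [h2]
      simp only [Algebra.smul_def] at h1 ⊢
      linear_combination h1
    exact smul_right_injective _ hz this
  exact mul_left_cancel₀ hne h3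

theorem IsDem.mul_inv (hT : IsDem τ a b s T) (hne : b - a ≠ 0)
    (hs : ∀ f g, s (f * g) = s f * s g) {g : Laur F m} (hg : s g = g) (f : Laur F m) :
    T (g * f) = g * T f := by
  apply mul_left_cancel₀ hne
  have h1 := hT (g * f)
  have h2 := hT f
  rw [hs, hg] at h1
  simp only [Algebra.smul_def] at h1 h2
  linear_combination h1 - g * h2

theorem IsDem.mul_a (hT : IsDem τ a b s T) (hne : b - a ≠ 0)
    (hs : ∀ f g, s (f * g) = s f * s g) (hab : s a = b) (f : Laur F m) :
    T (a * f) = b * (T f + (τ⁻¹ - τ) • f) := by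
  apply mul_left_cancel₀ hne
  have h1 := hT (a * f)
  have h2 := hT f
  rw [hs, hab] at h1
  simp only [Algebra.smul_def, map_sub] at h1 h2 ⊢
  linear_combination h1 - b * h2

theorem IsDem.far (hT : IsDem τ a b s T) {a2 b2 : Laur F m}
    {s2 T2 : Module.End F (Laur F m)} (hT2 : IsDem τ a2 b2 s2 T2) (hne : b - a ≠ 0)
    (hne2 : b2 - a2 ≠ 0) (hs : ∀ f g, s (f * g) = s f * s g)
    (hs2 : ∀ f g, s2 (f * g) = s2 f * s2 g) (e1 : s a2 = a2) (e2 : s b2 = b2)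
    (e3 : s2 a = a) (e4 : s2 b = b) (hss : ∀ f, s (s2 f) = s2 (s f)) (f : Laur F m) :
    T (T2 f) = T2 (T f) := by
  have i1 : s (T2 f) = T2 (s f) :=
    hT2.intertwine hT2 hne2 s hs one_ne_zero (by rw [e2, one_smul]) (by rw [e1, one_smul]) hss f
  apply mul_left_cancel₀ hne
  have h1 := hT (T2 f)
  have h2 := congrArg T2 (hT f)
  rw [i1] at h1
  rw [h1]
  have j1 : s2 (b - a) = b - a := by rw [map_sub, e3, e4]
  have j2 : s2 (τ⁻¹ • b - τ • a) = (τ⁻¹ • b - τ • a) := by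
    rw [map_sub, map_smul, map_smul, e3, e4]
  rw [hT2.mul_inv hne2 hs2 j1, map_add, map_smul, hT2.mul_inv hne2 hs2 j2,
    hT2.mul_inv hne2 hs2 e4] at h2
  exact h2.symm

theorem IsDem.braid {c : Laur F m} {s2 T2 : Module.End F (Laur F m)}
    (hT : IsDem τ a b s T) (hT2 : IsDem τ b c s2 T2)
    (hab : b - a ≠ 0) (hbc : c - b ≠ 0) (hac : c - a ≠ 0)
    (hs : ∀ f g, s (f * g) = s f * s g) (hs2 : ∀ f g, s2 (f * g) = s2 f * s2 g)
    (sa : s a = b) (sb : s b = a) (sc : s c = c) (ta : s2 a = a) (tb : s2 b = c) (tc : s2 c = b)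
    (ss : ∀ f, s (s f) = f) (tt : ∀ f, s2 (s2 f) = f)
    (sts : ∀ f, s (s2 (s f)) = s2 (s (s2 f))) (p : Laur F m) :
    T (T2 (T p)) = T2 (T (T2 p)) := by
  let K := FractionRing (Laur F m)
  let ι : Laur F m →+* K := algebraMap (Laur F m) K
  have hι : Function.Injective ι := IsFractionRing.injective (Laur F m) K
  have nz : ∀ x y : Laur F m, x - y ≠ 0 → ι x - ι y ≠ 0 := fun x y h h0 => h (by
    apply hι; rw [map_sub, h0, map_zero])
  have tr : ∀ (x y f g k : Laur F m),
      (y - x) * f = (τ⁻¹ • y - τ • x) * g + (τ - τ⁻¹) • (y * k) →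
      (ι y - ι x) * ι f = (ι (algebraMap F _ τ⁻¹) * ι y - ι (algebraMap F _ τ) * ι x) * ι g
        + (ι (algebraMap F _ τ) - ι (algebraMap F _ τ⁻¹)) * (ι y * ι k) := by
    intro x y f g k h
    have h' := congrArg ι h
    simpa only [Algebra.smul_def, map_mul, map_add, map_sub] using h'
  have As : ∀ (x y f g k : Laur F m),
      (y - x) * f = (τ⁻¹ • y - τ • x) * g + (τ - τ⁻¹) • (y * k) →
      (s y - s x) * s f = (τ⁻¹ • s y - τ • s x) * s g + (τ - τ⁻¹) • (s y * s k) := by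
    intro x y f g k h
    have h' := congrArg s h
    simpa only [hs, map_add, map_sub, map_smul] using h'
  have At : ∀ (x y f g k : Laur F m),
      (y - x) * f = (τ⁻¹ • y - τ • x) * g + (τ - τ⁻¹) • (y * k) →
      (s2 y - s2 x) * s2 f = (τ⁻¹ • s2 y - τ • s2 x) * s2 g + (τ - τ⁻¹) • (s2 y * s2 k) := by
    intro x y f g k h
    have h' := congrArg s2 h
    simpa only [hs2, map_add, map_sub, map_smul] using h'
  have h1 := hT p
  have h1s := As _ _ _ _ _ h1
  have h1t := At _ _ _ _ _ h1
  have h1st := As _ _ _ _ _ h1t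
  have h2 := hT2 (T p)
  have h2s := As _ _ _ _ _ h2
  have h3 := hT (T2 (T p))
  have k1 := hT2 p
  have k1t := At _ _ _ _ _ k1
  have k1s := As _ _ _ _ _ k1
  have k1ts := At _ _ _ _ _ k1s
  have k2 := hT (T2 p)
  have k2t := At _ _ _ _ _ k2
  have k3 := hT2 (T (T2 p))
  simp only [sa, sb, sc, ta, tb, tc, ss, tt] at h1s h1t h1st h2s k1t k1s k1ts k2t
  rw [← sts] at k1ts
  apply hι
  exact braid_field (ι a) (ι b) (ι c) (ι (algebraMap F _ τ)) (ι (algebraMap F _ τ⁻¹)) (ι p) (ι (s p))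
    (ι (s2 p)) (ι (s (s2 p))) (ι (s2 (s p))) (ι (s (s2 (s p)))) (nz _ _ hab) (nz _ _ hbc)
    (nz _ _ hac) _ _ _ _ _ _ _ _ _ _ _ _ _ _
    (tr _ _ _ _ _ h1) (tr _ _ _ _ _ h1s) (tr _ _ _ _ _ h1t) (tr _ _ _ _ _ h1st)
    (tr _ _ _ _ _ h2) (tr _ _ _ _ _ h2s) (tr _ _ _ _ _ h3)
    (tr _ _ _ _ _ k1) (tr _ _ _ _ _ k1t) (tr _ _ _ _ _ k1s) (tr _ _ _ _ _ k1ts)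
    (tr _ _ _ _ _ k2) (tr _ _ _ _ _ k2t) (tr _ _ _ _ _ k3)

theorem eMD_add {α β : Type*} (w : α ≃ β) (a b : α →₀ ℤ) :
    Finsupp.equivMapDomain w (a + b) = Finsupp.equivMapDomain w a + Finsupp.equivMapDomain w b := by
  ext i; simp

end concretePart

theorem swap_braid {α : Type*} [DecidableEq α] {a b c : α} (hab : a ≠ b) (hac : a ≠ c)
    (hbc : b ≠ c) :
    Equiv.swap a b * (Equiv.swap b c * Equiv.swap a b)
      = Equiv.swap b c * (Equiv.swap a b * Equiv.swap b c) := by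
  have h1 := Equiv.swap_mul_swap_mul_swap (x := a) (y := b) (z := c) hab hac
  have h2 := Equiv.swap_mul_swap_mul_swap (x := c) (y := b) (z := a) hbc.symm hac.symm
  rw [← mul_assoc, ← mul_assoc, h1, Equiv.swap_comm c a, ← h2, Equiv.swap_comm b a,
    Equiv.swap_comm c b]
/-- The `q`-Dunkl-type operators `D_i` of the DAHA polynomial representation pairwise commute (all indices `0`-based). -/
theorem statement5
    (F : Type*) [Field F] (n : ℕ) [NeZero n]
    (q τ : F) (hq : q ≠ 0) (hqroot : ∀ m : ℕ, m ≠ 0 → q ^ m ≠ 1) (hτ : τ ≠ 0)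
    -- the action of the symmetric group permuting the variables
    (W : Equiv.Perm (Fin n) → Module.End F (Laur F n))
    (hW : ∀ (w : Equiv.Perm (Fin n)) (a : Fin n →₀ ℤ) (c : F),
      W w (mono a c) = mono (Finsupp.equivMapDomain w a) c)
    -- the Demazure–Lusztig operators `T_k` and their inverses `Ti k = T k + τ⁻¹ - τ`
    (T Ti : ℕ → Module.End F (Laur F n))
    (hT : ∀ (k : ℕ) (hk : k + 1 < n) (p : Laur F n),
      (Xel ⟨k + 1, hk⟩ - Xel ⟨k, Nat.lt_of_succ_lt hk⟩) * T k p
        = (τ⁻¹ • Xel ⟨k + 1, hk⟩ - τ • Xel ⟨k, Nat.lt_of_succ_lt hk⟩)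
            * W (Equiv.swap ⟨k, Nat.lt_of_succ_lt hk⟩ ⟨k + 1, hk⟩) p
          + (τ - τ⁻¹) • (Xel ⟨k + 1, hk⟩ * p))
    (hTi : ∀ k, Ti k = T k + (τ⁻¹ - τ) • (1 : Module.End F (Laur F n)))
    (hTinv : ∀ k, k + 1 < n → T k * Ti k = 1 ∧ Ti k * T k = 1)
    -- the operator `π⁻¹`
    (piInv : Module.End F (Laur F n))
    (hpiInv : ∀ (a : Fin n →₀ ℤ) (c : F),
      piInv (mono a c)
        = q ^ (a 0) • mono (Finsupp.equivMapDomain (finRotate n).symm a) c)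
    -- the operators `Y_i = T_i ⋯ T_{n-1} ⬝ π⁻¹ ⬝ T_1⁻¹ ⋯ T_{i-1}⁻¹` and their inverses
    (Y Yi : ℕ → Module.End F (Laur F n))
    (hY : ∀ i, Y i = aF T i (n - 1 - i) * piInv * aF Ti 0 i)
    (hYinv : ∀ i, i < n → Y i * Yi i = 1 ∧ Yi i * Y i = 1)
    -- the `q`-Dunkl-type operators `D_i`
    (D : ℕ → Module.End F (Laur F n))
    (hD : ∀ i, D i = aF T i (n - 1 - i)
        * ((q - q⁻¹)⁻¹ • (XinvOp (n - 1) * (Y (n - 1) - Yi (n - 1))))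
        * dF T i (n - 1 - i))
    :
    ∀ i j : ℕ, i < n → j < n → D i * D j = D j * D i := by

  -- the permutation operators are multiplicative
  have Wmul : ∀ w f g, W w (f * g) = W w f * W w g := by
    intro w
    apply mul_hom_of_mono
    intro a b c d
    rw [mono_mul, hW, hW, hW, mono_mul, eMD_add]
  have WX : ∀ w i, W w (Xel i) = Xel (w i) := by
    intro w i
    rw [Xel, hW, Finsupp.equivMapDomain_single, Xel]
  have WXi : ∀ w i, W w (XinvEl i) = XinvEl (w i) := by
    intro w i
    rw [XinvEl, hW, Finsupp.equivMapDomain_single, XinvEl]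
  have Wcomp : ∀ v w f, W v (W w f) = W (v * w) f := by
    intro v w f
    have : W v * W w = W (v * w) := by
      apply lin_ext_mono
      intro a c
      rw [Module.End.mul_apply, hW, hW, hW]
      congr 1
      ext i
      simp [Finsupp.equivMapDomain_apply, Equiv.Perm.mul_def]
    rw [← this]; rfl
  have W1 : ∀ f, W 1 f = f := by
    intro f
    have : W 1 = 1 := by
      apply lin_ext_mono
      intro a c
      rw [hW, Module.End.one_apply]
      congr 1
      ext i
      simp [Finsupp.equivMapDomain_apply, Equiv.Perm.one_def]
    rw [this]; rfl
  have Pmul : ∀ f g, piInv (f * g) = piInv f * piInv g := by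
    apply mul_hom_of_mono
    intro a b c d
    rw [mono_mul, hpiInv, hpiInv, hpiInv, smul_mul_smul_comm, mono_mul, eMD_add, ← zpow_add₀ hq,
      Finsupp.add_apply]
  -- piInv on the permutation operators
  have PW : ∀ σ : Equiv.Perm (Fin n), σ 0 = 0 → ∀ f,
      piInv (W σ f) = W ((finRotate n).symm * σ * finRotate n) (piInv f) := by
    intro σ hσ f
    have : piInv * W σ = W ((finRotate n).symm * σ * finRotate n) * piInv := by
      apply lin_ext_mono
      intro a c
      have h0 : σ.symm 0 = 0 := by rw [Equiv.symm_apply_eq, hσ]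
      rw [Module.End.mul_apply, Module.End.mul_apply, hW, hpiInv, hpiInv, map_smul, hW,
        Finsupp.equivMapDomain_apply, h0]
      congr 2
      ext i
      simp [Finsupp.equivMapDomain_apply, Equiv.Perm.mul_def]
    exact congrArg (fun z => z f) this
  have Psucc : ∀ (k : ℕ) (hk : k + 1 < n),
      (finRotate n).symm ⟨k + 1, hk⟩ = ⟨k, Nat.lt_of_succ_lt hk⟩ := by
    intro k hk
    obtain ⟨N, rfl⟩ : ∃ N, n = N + 1 := ⟨n - 1, by omega⟩
    rw [Equiv.symm_apply_eq, finRotate_of_lt (by omega)]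
  have Pzero : ∀ (h0 : n - 1 < n), (finRotate n).symm 0 = ⟨n - 1, h0⟩ := by
    intro h0
    obtain ⟨N, rfl⟩ : ∃ N, n = N + 1 := ⟨n - 1, by omega⟩
    rw [Equiv.symm_apply_eq]
    exact finRotate_last'.symm
  have PX : ∀ (k : ℕ) (hk : k + 1 < n),
      piInv (Xel ⟨k + 1, hk⟩) = Xel ⟨k, Nat.lt_of_succ_lt hk⟩ := by
    intro k hk
    rw [Xel, hpiInv, Finsupp.equivMapDomain_single, Psucc, Finsupp.single_eq_of_ne, zpow_zero,
      one_smul, Xel]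
    simp [Fin.ext_iff]
  have PXi : ∀ (k : ℕ) (hk : k + 1 < n),
      piInv (XinvEl ⟨k + 1, hk⟩) = XinvEl ⟨k, Nat.lt_of_succ_lt hk⟩ := by
    intro k hk
    rw [XinvEl, hpiInv, Finsupp.equivMapDomain_single, Psucc, Finsupp.single_eq_of_ne, zpow_zero,
      one_smul, XinvEl]
    simp [Fin.ext_iff]
  have PX0 : ∀ (h0 : n - 1 < n), piInv (Xel 0) = q • Xel ⟨n - 1, h0⟩ := by
    intro h0
    rw [Xel, hpiInv, Finsupp.equivMapDomain_single, Pzero h0, Finsupp.single_eq_same, zpow_one, Xel]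
  have hdem : ∀ (k : ℕ) (hk : k + 1 < n), IsDem τ (Xel ⟨k, Nat.lt_of_succ_lt hk⟩)
      (Xel ⟨k + 1, hk⟩) (W (Equiv.swap ⟨k, Nat.lt_of_succ_lt hk⟩ ⟨k + 1, hk⟩)) (T k) :=
    fun k hk f => hT k hk f
  have hne : ∀ (k : ℕ) (hk : k + 1 < n),
      (Xel ⟨k + 1, hk⟩ - Xel ⟨k, Nat.lt_of_succ_lt hk⟩ : Laur F n) ≠ 0 := by
    intro k hk
    apply Xel_sub_ne
    simp [Fin.ext_iff]
  have sw : ∀ (k : ℕ) (hk : k + 1 < n) (j : Fin n), j.1 ≠ k → j.1 ≠ k + 1 →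
      Equiv.swap ⟨k, Nat.lt_of_succ_lt hk⟩ ⟨k + 1, hk⟩ j = j := by
    intro k hk j h1 h2
    apply Equiv.swap_apply_of_ne_of_ne <;> simpa [Fin.ext_iff]
  have hn0 : 0 < n := Nat.pos_of_ne_zero (NeZero.ne n)
  have hlast : n - 1 < n := by omega
  -- T k a = b Ti k
  have hTX : ∀ (k : ℕ) (hk : k + 1 < n) (f : Laur F n),
      T k (Xel ⟨k, Nat.lt_of_succ_lt hk⟩ * f) = Xel ⟨k + 1, hk⟩ * Ti k f := by
    intro k hk f
    rw [(hdem k hk).mul_a (hne k hk) (Wmul _) (by rw [WX, Equiv.swap_apply_left]), hTi]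
    rfl
  have XXi : ∀ i : Fin n, (XinvEl i * Xel i : Laur F n) = 1 := by
    intro i
    rw [XinvEl, Xel, mono_mul, ← Finsupp.single_add]
    simp [mono, AddMonoidAlgebra.one_def]
  have hTXi : ∀ (k : ℕ) (hk : k + 1 < n) (f : Laur F n),
      XinvEl ⟨k, Nat.lt_of_succ_lt hk⟩ * f = T k (XinvEl ⟨k + 1, hk⟩ * T k f) := by
    intro k hk f
    have e := hTX k hk (XinvEl ⟨k, Nat.lt_of_succ_lt hk⟩ * f)
    rw [← mul_assoc, mul_comm (Xel _) (XinvEl _), XXi, one_mul] at e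
    rw [e, ← mul_assoc, XXi, one_mul, ← Module.End.mul_apply, (hTinv k hk).1]
    rfl
  let x1 : Module.End F (Laur F n) := XinvOp (n - 2)
  let D' : ℕ → Module.End F (Laur F n) := fun i => aF T i (n - 1 - i)
        * (XinvOp (n - 1) * (Y (n - 1) - Yi (n - 1))) * dF T i (n - 1 - i)
  have hDD' : ∀ i, D i = (q - q⁻¹)⁻¹ • D' i := by
    intro i
    rw [hD]
    simp only [D', mul_smul_comm, smul_mul_assoc]
  have xop : ∀ k (hk : k < n) (f : Laur F n), XinvOp k f = XinvEl ⟨k, hk⟩ * f := by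
    intro k hk f
    simp [XinvOp, hk, mulOp]
  suffices hmain : ∀ i j, i ≤ n - 1 → j ≤ n - 1 → D' i * D' j = D' j * D' i by
    intro i j hi hj
    rw [hDD', hDD', smul_mul_smul_comm, smul_mul_smul_comm, hmain i j (by omega) (by omega)]
  rcases Nat.eq_or_lt_of_le (show 1 ≤ n from hn0) with hn1 | hn2
  · intro i j hi hj
    obtain rfl : i = j := by omega
    rfl
  refine D_comm_abstract (n - 1) T Ti D' ((τ - τ⁻¹) • (1 : Module.End F (Laur F n))) piInv
    (XinvOp (n - 1)) x1 (Y (n - 1)) (Yi (n - 1)) ?_ ?_ ?_ ?_ ?_ ?_ ?_ ?_ ?_ ?_ ?_ ?_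
    (hYinv _ hlast).1 (hYinv _ hlast).2 ?_ ?_
  · intro z
    rw [smul_mul_assoc, mul_smul_comm, one_mul, mul_one]
  · intro k hk
    rw [hTi]
    apply LinearMap.ext
    intro f
    simp only [LinearMap.add_apply, LinearMap.sub_apply, LinearMap.smul_apply, Module.End.one_apply]
    simp only [Algebra.smul_def, map_sub]
    ring
  · intro k hk
    exact hTinv k (by omega)
  · intro i j hij hj
    have hi' : i + 1 < n := by omega
    have hj' : j + 1 < n := by omega
    apply LinearMap.ext
    intro f
    refine (hdem i hi').far (hdem j hj') (hne i hi') (hne j hj') (Wmul _) (Wmul _) ?_ ?_ ?_ ?_ ?_ f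
    · rw [WX, sw i hi' _ (by simp; omega) (by simp; omega)]
    · rw [WX, sw i hi' _ (by simp; omega) (by simp; omega)]
    · rw [WX, sw j hj' _ (by simp; omega) (by simp; omega)]
    · rw [WX, sw j hj' _ (by simp; omega) (by simp; omega)]
    · intro f
      rw [Wcomp, Wcomp, Equiv.mul_swap_eq_swap_mul,
        sw i hi' _ (by simp; omega) (by simp; omega), sw i hi' _ (by simp; omega) (by simp; omega)]
  · intro i hi
    have hi' : i + 1 < n := by omega
    have hj' : i + 1 + 1 < n := by omega
    apply LinearMap.ext
    intro f
    refine (hdem i hi').braid (hdem (i+1) hj') (hne i hi') (hne (i+1) hj') ?_ (Wmul _) (Wmul _)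
      ?_ ?_ ?_ ?_ ?_ ?_ ?_ ?_ ?_ f
    · apply Xel_sub_ne
      simp [Fin.ext_iff]
      omega
    · rw [WX, Equiv.swap_apply_left]
    · rw [WX, Equiv.swap_apply_right]
    · rw [WX, sw i hi' _ (by simp; omega) (by simp)]
    · rw [WX, sw (i+1) hj' _ (by simp) (by simp; omega)]
    · rw [WX, Equiv.swap_apply_left]
    · rw [WX, Equiv.swap_apply_right]
    · intro f
      rw [Wcomp, Equiv.swap_mul_self, W1]
    · intro f
      rw [Wcomp, Equiv.swap_mul_self, W1]
    · intro f
      rw [Wcomp, Wcomp, Wcomp, Wcomp]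
      rw [mul_assoc, mul_assoc, swap_braid] <;> simp [Fin.ext_iff]
      omega
  · intro k hk
    have hk1 : k + 1 < n := by omega
    have hk2 : k + 1 + 1 < n := by omega
    apply LinearMap.ext
    intro f
    refine (hdem (k+1) hk2).intertwine (hdem k hk1) (hne k hk1) piInv Pmul one_ne_zero ?_ ?_ ?_ f
    · rw [PX, one_smul]
    · rw [PX, one_smul]
    · intro f
      rw [PW _ (sw (k+1) hk2 0 (by simp) (by simp)), Equiv.mul_swap_eq_swap_mul, mul_assoc]
      rw [Psucc, Psucc]
      congr 2
      simp [Equiv.Perm.mul_def]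
  · intro _
    have h1 : 0 + 1 < n := by omega
    have hl : n - 2 + 1 < n := by omega
    have e2 : n - 1 - 1 = n - 2 := by omega
    have e1 : (⟨n - 2 + 1, hl⟩ : Fin n) = ⟨n - 1, hlast⟩ := by simp [Fin.ext_iff]; omega
    rw [e2]
    apply LinearMap.ext
    intro f
    have z0 : (⟨0, Nat.lt_of_succ_lt h1⟩ : Fin n) = 0 := rfl
    refine (hdem 0 h1).intertwine (hdem (n-2) hl) (hne (n-2) hl) (piInv * piInv) ?_ hq ?_ ?_ ?_ f
    · intro f g
      simp only [Module.End.mul_apply, Pmul]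
    · rw [Module.End.mul_apply, PX, z0, PX0 hlast, e1]
    · rw [Module.End.mul_apply, z0, PX0 hlast, map_smul]
      have := PX (n-2) hl
      rw [e1] at this
      rw [this]
    · intro f
      have hr0 : finRotate n 0 = ⟨0 + 1, h1⟩ := by
        rw [← z0, ← Psucc 0 h1, Equiv.apply_symm_apply]
      have PP : ∀ a c, piInv (piInv (mono a c)) = (q ^ (a 0) * q ^ (a ⟨0 + 1, h1⟩)) •
          mono (Finsupp.equivMapDomain (finRotate n).symm
            (Finsupp.equivMapDomain (finRotate n).symm a)) c := by
        intro a c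
        rw [hpiInv, map_smul, hpiInv, smul_smul, Finsupp.equivMapDomain_apply, Equiv.symm_symm, hr0]
      have hgen : (piInv * piInv) * W (Equiv.swap ⟨0, Nat.lt_of_succ_lt h1⟩ ⟨0 + 1, h1⟩)
          = W (Equiv.swap ⟨n - 2, Nat.lt_of_succ_lt hl⟩ ⟨n - 2 + 1, hl⟩) * (piInv * piInv) := by
        have e3 : Equiv.swap ⟨n - 2, Nat.lt_of_succ_lt hl⟩ ⟨n - 2 + 1, hl⟩
            = ((finRotate n).symm * (finRotate n).symm)
              * Equiv.swap ⟨0, Nat.lt_of_succ_lt h1⟩ ⟨0 + 1, h1⟩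
              * (finRotate n * finRotate n) := by
          rw [Equiv.mul_swap_eq_swap_mul, Equiv.Perm.mul_apply, Equiv.Perm.mul_apply, Psucc 0 h1, z0,
            Pzero hlast, ← e1, Psucc, Equiv.swap_comm]
          ext i
          simp [Equiv.Perm.mul_def]
        apply lin_ext_mono
        intro a c
        simp only [Module.End.mul_apply]
        rw [hW, PP, PP, map_smul, hW, e3]
        congr 1
        · rw [Finsupp.equivMapDomain_apply, Finsupp.equivMapDomain_apply, Equiv.symm_swap,
            ← z0, Equiv.swap_apply_left, Equiv.swap_apply_right, mul_comm]
        · congr 1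
          ext i
          simp [Finsupp.equivMapDomain_apply, Equiv.Perm.mul_def]
      exact congrArg (fun z => z f) hgen
  · intro k hk
    have hk1 : k + 1 < n := by omega
    apply LinearMap.ext
    intro f
    rw [Module.End.mul_apply, Module.End.mul_apply, xop _ hlast, xop _ hlast]
    apply (hdem k hk1).mul_inv (hne k hk1) (Wmul _)
    rw [WXi, sw k hk1 _ (by simp; omega) (by simp; omega)]
  · intro _
    have hl : n - 2 + 1 < n := by omega
    have e2 : n - 1 - 1 = n - 2 := by omega
    have e1 : (⟨n - 2 + 1, hl⟩ : Fin n) = ⟨n - 1, hlast⟩ := by simp [Fin.ext_iff]; omega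
    rw [e2]
    apply LinearMap.ext
    intro f
    rw [Module.End.mul_apply, Module.End.mul_apply, xop _ hlast, ← e1, ← hTXi]
    exact xop _ _ _
  · apply LinearMap.ext
    intro f
    simp only [x1]
    rw [Module.End.mul_apply, Module.End.mul_apply, xop _ hlast, xop _ hlast,
      xop (n-2) (by omega), xop (n-2) (by omega)]
    ring
  · have hl : n - 2 + 1 < n := by omega
    have e1 : (⟨n - 2 + 1, hl⟩ : Fin n) = ⟨n - 1, hlast⟩ := by simp [Fin.ext_iff]; omega
    apply LinearMap.ext
    intro f
    simp only [x1]
    rw [Module.End.mul_apply, Module.End.mul_apply, xop _ hlast, xop (n-2) (by omega), Pmul, ← e1, PXi]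
  · rw [hY, Nat.sub_self, aF_zero, one_mul]
  · simp only [D', Nat.sub_self, aF_zero, dF_zero, one_mul, mul_one]
  · intro i hi
    obtain ⟨d, hd⟩ : ∃ d, n - 1 - i = d + 1 := ⟨n - 1 - i - 1, by omega⟩
    have hd' : n - 1 - (i + 1) = d := by omega
    simp only [D', hd, hd', aF_succ_left, dF_succ_left, mul_assoc]
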